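/- For all integers ℓ, r, c, a the following identity holds in F = ℚ(q)(x): q^{r−2a}·[2ℓ−r]·(q^{2−2r}x − 1)/(q^{4c−2r+2}x − 1) + q^{2ℓ−a}·[a] + q^{2c+r−2ℓ−a}·[r−2c−a]·(q^{2−2r}x − 1)/(q^{4c−2r+2}x − 1) + q^{2c−2ℓ}·[2c]·(q^{−2a}x − 1)/(q^{4c−2r+2}x − 1) + q^{1−r−2a}·[2ℓ−r+1]·(q^{4c} − 1)·x/(q^{4c−2r+2}x − 1) = [2ℓ]. -/

import Mathlib

noncomputable section

abbrev Kq : Type := RatFunc ℚ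

/-- The field `F = ℚ(q)(x)` of rational functions in two variables `q, x`. -/
abbrev Fq : Type := RatFunc Kq

/-- The variable `q` in `F = ℚ(q)(x)`. -/
def qF : Fq := RatFunc.C RatFunc.X

/-- The variable `x` in `F = ℚ(q)(x)` (playing the role of `K⁻²`). -/
def xF : Fq := RatFunc.X

/-- The quantum integer `[n] = (q^n - q^{-n})/(q - q^{-1})` in `F`. -/
def qintF (n : ℤ) : Fq := (qF ^ n - qF ^ (-n)) / (qF - qF⁻¹)

/-!
Put `D = q ^ (4c-2r+2) x - 1`, `N = q ^ (2-2r) x - 1` and `t = N / D`. Writing both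
`[2c] (q ^ (-2a) x - 1)` and `(q ^ (4c) - 1) x` as linear combinations of `D` and `N` makes the
left-hand side affine in `t`. Its constant term is `[2ℓ]`, by splitting
`2ℓ = a + (2ℓ-r+1) + (r-1-a)` in the addition formula `[m+n] = q ^ n [m] + q ^ (-m) [n]`, and the
coefficient of `t` vanishes because `q ^ n ([n+1] - q [n]) = 1` for every `n`.
-/

/-- The quantum integer `[n]` at a parameter `q` of an arbitrary field, extending `qintF`. By the
convention `y / 0 = 0` it is `0` rather than `± n` when `q ^ 2 = 1`. -/
def quantumInt {F : Type*} [Field F] (q : F) (n : ℤ) : F :=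
  (q ^ n - q ^ (-n)) / (q - q⁻¹)

section QuantumInt

variable {F : Type*} [Field F] {q : F}

theorem quantumInt_neg (n : ℤ) : quantumInt q (-n) = -quantumInt q n := by
  simp only [quantumInt, neg_neg]
  ring

theorem quantumInt_one (hq : q ≠ 0) (hq2 : q ^ 2 ≠ 1) : quantumInt q 1 = 1 := by
  have hne : q - q⁻¹ ≠ 0 := fun h => hq2 <| by
    rw [sq, ← mul_inv_cancel₀ hq, ← sub_eq_zero.mp h]
  simpa only [quantumInt, zpow_one, zpow_neg] using div_self hne

theorem quantumInt_add (hq : q ≠ 0) (m n : ℤ) :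
    quantumInt q (m + n) = q ^ n * quantumInt q m + q ^ (-m) * quantumInt q n := by
  simp only [quantumInt, neg_add, zpow_add₀ hq]
  ring

theorem quantumInt_add_add (hq : q ≠ 0) (k m n : ℤ) :
    quantumInt q (k + m + n) =
      q ^ (m + n) * quantumInt q k + q ^ (n - k) * quantumInt q m
        + q ^ (-k - m) * quantumInt q n := by
  rw [add_assoc, quantumInt_add hq k, quantumInt_add hq m, sub_eq_add_neg, sub_eq_add_neg,
    zpow_add₀ hq n, zpow_add₀ hq (-k)]
  ring

theorem zpow_mul_quantumInt_add_one_sub (hq : q ≠ 0) (hq2 : q ^ 2 ≠ 1) (s n : ℤ) :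
    q ^ (s + n) * quantumInt q (n + 1) - q ^ (s + n + 1) * quantumInt q n = q ^ s := by
  have hn : q ^ n ≠ 0 := zpow_ne_zero n hq
  rw [quantumInt_add hq, quantumInt_one hq hq2, zpow_one, zpow_add_one₀ hq, zpow_add₀ hq, zpow_neg]
  field_simp
  ring

/-- Interpolation of `y ↦ y * x - 1` at the nodes `q ^ (2 * m)` and `q ^ (2 * n)`. -/
theorem quantumInt_sub_mul_zpow_mul_sub_one (hq : q ≠ 0) (x : F) (k m n : ℤ) :
    quantumInt q (m - n) * (q ^ (2 * k) * x - 1) =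
      q ^ (k - m) * quantumInt q (k - n) * (q ^ (2 * m) * x - 1)
        + q ^ (k - n) * quantumInt q (m - k) * (q ^ (2 * n) * x - 1) := by
  have constant_coeff : quantumInt q (m - n) =
      q ^ (k - n) * quantumInt q (m - k) + q ^ (k - m) * quantumInt q (k - n) := by
    simpa only [sub_add_sub_cancel, neg_sub] using quantumInt_add hq (m - k) (k - n)
  have linear_coeff : q ^ (2 * k) * quantumInt q (m - n) =
      q ^ (k - m) * q ^ (2 * m) * quantumInt q (k - n)
        + q ^ (k - n) * q ^ (2 * n) * quantumInt q (m - k) := by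
    rw [← sub_add_sub_cancel' k n m, quantumInt_add hq, mul_add, ← mul_assoc, ← mul_assoc]
    simp only [← zpow_add₀ hq]
    ring_nf
  linear_combination x * linear_coeff - constant_coeff

theorem zpow_mul_quantumInt_sub_mul_div (hq : q ≠ 0) {x : F} {m : ℤ}
    (hm : q ^ (2 * m) * x - 1 ≠ 0) (s k n : ℤ) :
    q ^ s * quantumInt q (m - n) * ((q ^ (2 * k) * x - 1) / (q ^ (2 * m) * x - 1)) =
      q ^ (s + (k - m)) * quantumInt q (k - n)
        + q ^ (s + (k - n)) * quantumInt q (m - k) *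
          ((q ^ (2 * n) * x - 1) / (q ^ (2 * m) * x - 1)) := by
  rw [mul_assoc, ← mul_div_assoc, quantumInt_sub_mul_zpow_mul_sub_one hq, add_div,
    mul_div_cancel_right₀ _ hm, mul_div_assoc, zpow_add₀ hq s, zpow_add₀ hq s]
  ring

theorem zpow_mul_zpow_sub_one_mul_div (hq : q ≠ 0) {x : F} {m : ℤ} (hm : q ^ m * x - 1 ≠ 0)
    (s n : ℤ) :
    q ^ s * ((q ^ (m - n) - 1) * x / (q ^ m * x - 1)) =
      q ^ (s - n) * (1 - (q ^ n * x - 1) / (q ^ m * x - 1)) := by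
  have hn : q ^ n ≠ 0 := zpow_ne_zero n hq
  rw [one_sub_div hm, sub_sub_sub_cancel_right, zpow_sub₀ hq, zpow_sub₀ hq]
  field_simp

theorem identity_K3_constant_term (hq : q ≠ 0) (ℓ r a : ℤ) :
    q ^ (2 * ℓ - a) * quantumInt q a + q ^ (r - 1 - 2 * a) * quantumInt q (2 * ℓ - r + 1)
      + q ^ (r - 1 - a - 2 * ℓ) * quantumInt q (r - 1 - a) = quantumInt q (2 * ℓ) := by
  convert (quantumInt_add_add hq a (2 * ℓ - r + 1) (r - 1 - a)).symm using 4 <;> ring_nf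

theorem identity_K3_linear_coeff (hq : q ≠ 0) (hq2 : q ^ 2 ≠ 1) (ℓ r c a : ℤ) :
    q ^ (r - 2 * a) * quantumInt q (2 * ℓ - r)
      + q ^ (2 * c + r - 2 * ℓ - a) * quantumInt q (r - 2 * c - a)
      + q ^ (2 * c + r - 1 - a - 2 * ℓ) * quantumInt q (2 * c - r + 1 + a)
      - q ^ (r - 1 - 2 * a) * quantumInt q (2 * ℓ - r + 1) = 0 := by
  have first_difference : q ^ (r - 1 - 2 * a) * quantumInt q (2 * ℓ - r + 1)
      - q ^ (r - 2 * a) * quantumInt q (2 * ℓ - r) = q ^ (2 * r - 1 - 2 * a - 2 * ℓ) := by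
    convert zpow_mul_quantumInt_add_one_sub hq hq2 _ (2 * ℓ - r) using 4 <;> ring
  have second_difference : q ^ (2 * c + r - 1 - a - 2 * ℓ) * quantumInt q (2 * c - r + 1 + a)
      - q ^ (2 * c + r - 2 * ℓ - a) * quantumInt q (2 * c - r + a) =
        q ^ (2 * r - 1 - 2 * a - 2 * ℓ) := by
    convert zpow_mul_quantumInt_add_one_sub hq hq2 _ (2 * c - r + a) using 4 <;> ring
  rw [show r - 2 * c - a = -(2 * c - r + a) by ring, quantumInt_neg]
  linear_combination second_difference - first_difference

theorem identity_K3_general (hq : q ≠ 0) (hq2 : q ^ 2 ≠ 1) (x : F) (ℓ r c a : ℤ)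
    (hD : q ^ (4 * c - 2 * r + 2) * x - 1 ≠ 0) :
    q ^ (r - 2 * a) * quantumInt q (2 * ℓ - r) *
        ((q ^ (2 - 2 * r) * x - 1) / (q ^ (4 * c - 2 * r + 2) * x - 1))
      + q ^ (2 * ℓ - a) * quantumInt q a
      + q ^ (2 * c + r - 2 * ℓ - a) * quantumInt q (r - 2 * c - a) *
          ((q ^ (2 - 2 * r) * x - 1) / (q ^ (4 * c - 2 * r + 2) * x - 1))
      + q ^ (2 * c - 2 * ℓ) * quantumInt q (2 * c) *
          ((q ^ (-2 * a) * x - 1) / (q ^ (4 * c - 2 * r + 2) * x - 1))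
      + q ^ (1 - r - 2 * a) * quantumInt q (2 * ℓ - r + 1) *
          ((q ^ (4 * c) - 1) * x / (q ^ (4 * c - 2 * r + 2) * x - 1))
    = quantumInt q (2 * ℓ) := by
  set t := (q ^ (2 - 2 * r) * x - 1) / (q ^ (4 * c - 2 * r + 2) * x - 1)
  have fourth_term : q ^ (2 * c - 2 * ℓ) * quantumInt q (2 * c) *
        ((q ^ (-2 * a) * x - 1) / (q ^ (4 * c - 2 * r + 2) * x - 1)) =
      q ^ (r - 1 - a - 2 * ℓ) * quantumInt q (r - 1 - a)
        + q ^ (2 * c + r - 1 - a - 2 * ℓ) * quantumInt q (2 * c - r + 1 + a) * t := by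
    have hD_eq : 4 * c - 2 * r + 2 = 2 * (2 * c - r + 1) := by ring
    rw [hD_eq] at hD
    convert zpow_mul_quantumInt_sub_mul_div hq hD (2 * c - 2 * ℓ) (-a) (1 - r) using 4 <;> grind
  have fifth_term : q ^ (1 - r - 2 * a) *
        ((q ^ (4 * c) - 1) * x / (q ^ (4 * c - 2 * r + 2) * x - 1)) =
      q ^ (r - 1 - 2 * a) * (1 - t) := by
    rw [show r - 1 - 2 * a = 1 - r - 2 * a - (2 - 2 * r) by ring,
      ← zpow_mul_zpow_sub_one_mul_div hq hD,
      show 4 * c - 2 * r + 2 - (2 - 2 * r) = 4 * c by ring]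
  linear_combination fourth_term + quantumInt q (2 * ℓ - r + 1) * fifth_term
    + identity_K3_constant_term hq ℓ r a + t * identity_K3_linear_coeff hq hq2 ℓ r c a

end QuantumInt

section RatFunc

variable {K : Type*} [Field K]

theorem ratFunc_algebraMap_ne_one {p : Polynomial K} (hp : p.natDegree ≠ 0) :
    algebraMap (Polynomial K) (RatFunc K) p ≠ 1 := by
  rw [← map_one (algebraMap (Polynomial K) (RatFunc K)), (RatFunc.algebraMap_injective K).ne_iff]
  rintro rfl
  exact hp Polynomial.natDegree_one

theorem ratFunc_X_pow_ne_one {n : ℕ} (hn : n ≠ 0) : (RatFunc.X : RatFunc K) ^ n ≠ 1 := by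
  rw [← RatFunc.algebraMap_X, ← map_pow]
  exact ratFunc_algebraMap_ne_one (by rwa [Polynomial.natDegree_X_pow])

theorem ratFunc_C_mul_X_ne_one {k : K} (hk : k ≠ 0) : RatFunc.C k * RatFunc.X ≠ 1 := by
  rw [← RatFunc.algebraMap_X, ← RatFunc.algebraMap_C, ← map_mul]
  exact ratFunc_algebraMap_ne_one (by simp [hk])

end RatFunc

theorem qF_ne_zero : qF ≠ 0 :=
  (map_ne_zero RatFunc.C).mpr RatFunc.X_ne_zero

theorem qF_sq_ne_one : qF ^ 2 ≠ 1 := by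
  rw [qF, ← map_pow, RatFunc.C_injective.ne_iff' (map_one _)]
  exact ratFunc_X_pow_ne_one two_ne_zero

theorem qF_zpow_mul_xF_sub_one_ne_zero (m : ℤ) : qF ^ m * xF - 1 ≠ 0 := by
  rw [sub_ne_zero, qF, xF, ← map_zpow₀]
  exact ratFunc_C_mul_X_ne_one (zpow_ne_zero m RatFunc.X_ne_zero)

/-- Identity (4.9). -/
theorem identity_K3 (ℓ r c a : ℤ) :
    qF ^ (r - 2 * a) * qintF (2 * ℓ - r) *
        ((qF ^ (2 - 2 * r) * xF - 1) / (qF ^ (4 * c - 2 * r + 2) * xF - 1))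
      + qF ^ (2 * ℓ - a) * qintF a
      + qF ^ (2 * c + r - 2 * ℓ - a) * qintF (r - 2 * c - a) *
          ((qF ^ (2 - 2 * r) * xF - 1) / (qF ^ (4 * c - 2 * r + 2) * xF - 1))
      + qF ^ (2 * c - 2 * ℓ) * qintF (2 * c) *
          ((qF ^ (-2 * a) * xF - 1) / (qF ^ (4 * c - 2 * r + 2) * xF - 1))
      + qF ^ (1 - r - 2 * a) * qintF (2 * ℓ - r + 1) *
          ((qF ^ (4 * c) - 1) * xF / (qF ^ (4 * c - 2 * r + 2) * xF - 1))
    = qintF (2 * ℓ) :=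
  identity_K3_general qF_ne_zero qF_sq_ne_one xF ℓ r c a (qF_zpow_mul_xF_sub_one_ne_zero _)
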